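/- Assume the SOSC holds with respect to J. Fix a > 1, ε₀ > 0, and set b := max(2a, diam(J)/ε₀). Then for ν-almost every w ∈ W, writing x = π(w), the limit lim_{δ→0⁺} (1/ln(1/δ)) ∫_δ^{d(x,ℝ^d∖J)/b} ε^{−d} λ_d(F(ε) ∩ B(x,aε)) ε^{−1} dε exists, is finite, is independent of w, and equals (∑_{j=1}^N r_j^D ln(1/r_j))^{−1} · ∫_W ∫_{d(π(v),ℝ^d∖S_{v₁}(J))/b}^{d(π(v),ℝ^d∖J)/b} ε^{−d} λ_d(F(ε) ∩ B(π(v),aε)) ε^{−1} dε dν(v). -/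

import Mathlib

open MeasureTheory Metric Filter Set
open scoped ENNReal Topology

/-!
By the open set condition, at every scale `ε ≤ d(π w, S_{w₁}(J)ᶜ) / b` the parallel set of `F` near
`π w` is the `S_{w₁}`-image of the parallel set near `π (σ w)`, where `σ` is the shift. The density
`ε⁻ᵈ λ_d (F(ε) ∩ B(π w, a ε))` is therefore the density at `σ w` and scale `ε / r_{w₁}`. Cutting
`(0, ρ(w)]`, `ρ(w) = d(π w, Jᶜ) / b`, at the scales `r_{w₁} ⋯ r_{wₙ} ρ(σⁿ w)` turns the logarithmic
integral of the density into a Birkhoff sum over `σ`, and turns `ln (1 / δ)` into the Birkhoff sum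
of `ln (1 / r_{w₁})` plus the coboundary `ln ρ - ln (ρ ∘ σ)`. Bernoulli measures are ergodic for the
shift, and dividing the two ergodic averages gives the limit. No integrability of `ln ρ` has to be
checked: as `r_{w₁} ρ(σ w) ≤ ρ(w)`, the coboundary is bounded below by an integrable function, which
already makes it integrable with integral zero.
-/

section Birkhoff

variable {Ω : Type*} {T : Ω → Ω} {f : Ω → ℝ}

/-- The maximal function `max (0, S₁ f, …, Sₙ f)` of the first `n` Birkhoff sums, defined through
the recursion `Mₙ₊₁ = max (0, f + Mₙ ∘ T)`. -/
noncomputable def birkhoffMax (T : Ω → Ω) (f : Ω → ℝ) : ℕ → Ω → ℝ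
  | 0 => 0
  | n + 1 => fun x => max 0 (f x + birkhoffMax T f n (T x))

lemma birkhoffMax_succ (n : ℕ) (x : Ω) :
    birkhoffMax T f (n + 1) x = max 0 (f x + birkhoffMax T f n (T x)) := rfl

lemma birkhoffMax_nonneg (n : ℕ) (x : Ω) : 0 ≤ birkhoffMax T f n x := by
  cases n with
  | zero => exact le_rfl
  | succ n => exact le_max_left _ _

lemma birkhoffMax_mono (x : Ω) : Monotone fun n => birkhoffMax T f n x := by
  refine monotone_nat_of_le_succ fun n => ?_
  induction n generalizing x with
  | zero => exact birkhoffMax_nonneg 1 x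
  | succ n ih => exact max_le_max le_rfl (add_le_add le_rfl (ih (T x)))

lemma birkhoffSum_le_birkhoffMax (n : ℕ) (x : Ω) : birkhoffSum T f n x ≤ birkhoffMax T f n x := by
  induction n generalizing x with
  | zero => exact (birkhoffSum_zero T f x).le
  | succ n ih =>
    rw [birkhoffSum_succ']
    exact le_max_of_le_right (add_le_add le_rfl (ih (T x)))

lemma abs_birkhoffMax_succ_sub_le (n : ℕ) (x : Ω) :
    |birkhoffMax T f (n + 1) x - birkhoffMax T f n (T x)| ≤ |f x| := by
  have h_nonneg := birkhoffMax_nonneg (T := T) (f := f) n (T x)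
  rw [birkhoffMax_succ]
  rcases le_total 0 (f x + birkhoffMax T f n (T x)) with h | h
  · rw [max_eq_right h, add_sub_cancel_right]
  · rw [max_eq_left h, abs_le]
    constructor <;> linarith [neg_le_abs (f x), abs_nonneg (f x)]

lemma bddAbove_range_birkhoffMax_comp_iff (x : Ω) :
    BddAbove (range fun n => birkhoffMax T f n (T x)) ↔
      BddAbove (range fun n => birkhoffMax T f n x) := by
  simp only [bddAbove_def, forall_mem_range]
  constructor
  · rintro ⟨K, hK⟩
    refine ⟨max 0 (f x + K), fun n => (birkhoffMax_mono x n.le_succ).trans ?_⟩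
    exact max_le_max le_rfl (add_le_add le_rfl (hK n))
  · rintro ⟨K, hK⟩
    refine ⟨K - f x, fun n => ?_⟩
    have h_le : f x + birkhoffMax T f n (T x) ≤ K := (le_max_right _ _).trans (hK (n + 1))
    linarith

variable [MeasurableSpace Ω] {μ : Measure Ω}

lemma measurable_birkhoffMax (hT : Measurable T) (hf : Measurable f) (n : ℕ) :
    Measurable (birkhoffMax T f n) := by
  induction n with
  | zero => exact measurable_const
  | succ n ih => exact measurable_const.max (hf.add (ih.comp hT))

lemma integrable_birkhoffMax (hT : MeasurePreserving T μ μ) (hf : Integrable f μ) (n : ℕ) :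
    Integrable (birkhoffMax T f n) μ := by
  induction n with
  | zero => exact integrable_zero _ _ _
  | succ n ih =>
    exact (integrable_zero Ω ℝ μ).sup (hf.add (hT.integrable_comp_of_integrable ih))

lemma integral_birkhoffMax_comp_le (hT : MeasurePreserving T μ μ) (hf : Integrable f μ)
    (hfm : Measurable f) (n : ℕ) :
    ∫ x, birkhoffMax T f n (T x) ∂μ ≤ ∫ x, birkhoffMax T f (n + 1) x ∂μ := by
  rw [← integral_map hT.measurable.aemeasurable
    (measurable_birkhoffMax hT.measurable hfm n).aestronglyMeasurable, hT.map_eq]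
  exact integral_mono (integrable_birkhoffMax hT hf n) (integrable_birkhoffMax hT hf (n + 1))
    fun x => birkhoffMax_mono x n.le_succ

-- Once `Mₙ (T x) ≥ -f x`, the difference `Mₙ₊₁ x - Mₙ (T x)` is exactly `f x`; its integral is
-- nonnegative by invariance of `μ` and monotonicity of `Mₙ`.
lemma integral_nonneg_of_ae_not_bddAbove_birkhoffMax (hT : MeasurePreserving T μ μ)
    (hf : Integrable f μ) (hfm : Measurable f)
    (h : ∀ᵐ x ∂μ, ¬ BddAbove (range fun n => birkhoffMax T f n x)) :
    0 ≤ ∫ x, f x ∂μ := by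
  have h_lim : Tendsto (fun n => ∫ x, (birkhoffMax T f (n + 1) x - birkhoffMax T f n (T x)) ∂μ)
      atTop (𝓝 (∫ x, f x ∂μ)) := by
    refine tendsto_integral_of_dominated_convergence (fun x => |f x|) (fun n => ?_) hf.abs
      (fun n => ae_of_all μ (abs_birkhoffMax_succ_sub_le n)) ?_
    · exact ((measurable_birkhoffMax hT.measurable hfm _).sub
        ((measurable_birkhoffMax hT.measurable hfm n).comp hT.measurable)).aestronglyMeasurable
    · filter_upwards [h] with x hx
      have h_top : Tendsto (fun n => birkhoffMax T f n (T x)) atTop atTop :=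
        (tendsto_atTop_of_monotone (birkhoffMax_mono (T x))).resolve_right fun ⟨_, h_conv⟩ =>
          hx ((bddAbove_range_birkhoffMax_comp_iff x).1 h_conv.bddAbove_range)
      refine tendsto_const_nhds.congr' ?_
      filter_upwards [h_top.eventually_ge_atTop (-f x)] with n hn
      rw [birkhoffMax_succ, max_eq_right (by linarith), add_sub_cancel_right]
  refine ge_of_tendsto' h_lim fun n => ?_
  have h_comp : Integrable (fun x => birkhoffMax T f n (T x)) μ :=
    hT.integrable_comp_of_integrable (integrable_birkhoffMax hT hf n)
  rw [integral_sub (integrable_birkhoffMax hT hf _) h_comp, sub_nonneg]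
  exact integral_birkhoffMax_comp_le hT hf hfm n

lemma ae_bddAbove_birkhoffSum_of_integral_neg (hT : Ergodic T μ) (hf : Integrable f μ)
    (hfm : Measurable f) (h_neg : ∫ x, f x ∂μ < 0) :
    ∀ᵐ x ∂μ, BddAbove (range fun n => birkhoffSum T f n x) := by
  have h_meas : MeasurableSet {x | BddAbove (range fun n => birkhoffMax T f n x)} :=
    measurableSet_bddAbove_range fun n => measurable_birkhoffMax hT.measurable hfm n
  have h_inv : T ⁻¹' {x | BddAbove (range fun n => birkhoffMax T f n x)} =
      {x | BddAbove (range fun n => birkhoffMax T f n x)} :=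
    ext fun x => bddAbove_range_birkhoffMax_comp_iff x
  rcases hT.toPreErgodic.ae_mem_or_ae_notMem h_meas h_inv with h | h
  · filter_upwards [h] with x hx
    exact hx.range_mono _ fun n => birkhoffSum_le_birkhoffMax n x
  · exact absurd (integral_nonneg_of_ae_not_bddAbove_birkhoffMax hT.toMeasurePreserving hf hfm h)
      h_neg.not_ge

variable [IsProbabilityMeasure μ]

lemma ae_eventually_birkhoffAverage_le (hT : Ergodic T μ) (hf : Integrable f μ)
    (hfm : Measurable f) {c : ℝ} (hc : ∫ x, f x ∂μ < c) :
    ∀ᵐ x ∂μ, ∀ᶠ n in atTop, birkhoffAverage ℝ T f n x ≤ c := by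
  obtain ⟨c', hc', hc'c⟩ := exists_between hc
  have h_neg : ∫ x, (f x - c') ∂μ < 0 := by
    rw [integral_sub hf (integrable_const c')]
    simpa using hc'
  filter_upwards [ae_bddAbove_birkhoffSum_of_integral_neg hT (hf.sub (integrable_const c'))
    (hfm.sub_const c') h_neg] with x ⟨K, hK⟩
  filter_upwards [(tendsto_const_div_atTop_nhds_zero_nat K).eventually_le_const
    (sub_pos.2 hc'c), eventually_gt_atTop 0] with n hn hn_pos
  have hn_pos' : (0 : ℝ) < n := Nat.cast_pos.2 hn_pos
  have h_sum : birkhoffSum T f n x - n * c' ≤ K := by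
    simpa [birkhoffSum, Finset.sum_sub_distrib] using hK (mem_range_self n)
  rw [div_le_iff₀ hn_pos'] at hn
  rw [birkhoffAverage, smul_eq_mul, inv_mul_le_iff₀ hn_pos']
  linarith

lemma ae_forall_gt_eventually_birkhoffAverage_le (hT : Ergodic T μ) (hf : Integrable f μ)
    (hfm : Measurable f) :
    ∀ᵐ x ∂μ, ∀ c > ∫ x, f x ∂μ, ∀ᶠ n in atTop, birkhoffAverage ℝ T f n x ≤ c := by
  obtain ⟨u, -, hu_gt, hu_lim⟩ := exists_seq_strictAnti_tendsto (∫ x, f x ∂μ)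
  filter_upwards [ae_all_iff.2 fun k =>
    ae_eventually_birkhoffAverage_le hT hf hfm (hu_gt k)] with x hx c hc
  obtain ⟨k, hk⟩ := (hu_lim.eventually_lt_const hc).exists
  exact (hx k).mono fun n hn => hn.trans hk.le

theorem ae_tendsto_birkhoffAverage_of_measurable (hT : Ergodic T μ) (hf : Integrable f μ)
    (hfm : Measurable f) :
    ∀ᵐ x ∂μ, Tendsto (fun n => birkhoffAverage ℝ T f n x) atTop (𝓝 (∫ x, f x ∂μ)) := by
  filter_upwards [ae_forall_gt_eventually_birkhoffAverage_le hT hf hfm,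
    ae_forall_gt_eventually_birkhoffAverage_le hT hf.neg hfm.neg] with x h_upper h_lower
  simp only [birkhoffAverage_neg, Pi.neg_apply, integral_neg] at h_lower
  refine tendsto_order.2 ⟨fun c hc => ?_, fun c hc => ?_⟩
  · obtain ⟨c', hc', hc'_lt⟩ := exists_between hc
    exact (h_lower (-c') (neg_lt_neg hc'_lt)).mono fun n hn => hc'.trans_le (neg_le_neg_iff.1 hn)
  · obtain ⟨c', hc'_gt, hc'⟩ := exists_between hc
    exact (h_upper c' hc'_gt).mono fun n hn => hn.trans_lt hc'

theorem ae_tendsto_birkhoffAverage (hT : Ergodic T μ) (hf : Integrable f μ) :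
    ∀ᵐ x ∂μ, Tendsto (fun n => birkhoffAverage ℝ T f n x) atTop (𝓝 (∫ x, f x ∂μ)) := by
  have hfm := hf.aemeasurable
  have h_avg : ∀ᵐ x ∂μ, ∀ n, birkhoffAverage ℝ T f n x = birkhoffAverage ℝ T (hfm.mk f) n x :=
    ae_all_iff.2 fun n =>
      hT.quasiMeasurePreserving.birkhoffAverage_ae_eq_of_ae_eq ℝ hfm.ae_eq_mk n
  filter_upwards [h_avg, ae_tendsto_birkhoffAverage_of_measurable hT
    (hf.congr hfm.ae_eq_mk) hfm.measurable_mk] with x hx h_lim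
  simpa only [hx, integral_congr_ae hfm.ae_eq_mk] using h_lim

end Birkhoff

section Coboundary

/-- Truncation of a real number to the interval `[-k, k]`. Being monotone and `1`-Lipschitz, it
turns an arbitrary coboundary `f ∘ T - f` into a bounded one without increasing its positive part
or its absolute value. -/
def clamp (k : ℕ) (x : ℝ) : ℝ := max (-k) (min k x)

lemma abs_clamp_le (k : ℕ) (x : ℝ) : |clamp k x| ≤ k := by
  have hk : -(k : ℝ) ≤ k := neg_le_self k.cast_nonneg
  exact abs_le.2 ⟨le_max_left _ _, max_le hk (min_le_left _ _)⟩

lemma clamp_sub_clamp_le {k : ℕ} {x y c : ℝ} (h : x - y ≤ c) (hc : 0 ≤ c) :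
    clamp k x - clamp k y ≤ c := by
  unfold clamp
  grind

lemma abs_clamp_sub_clamp_le (k : ℕ) (x y : ℝ) : |clamp k x - clamp k y| ≤ |x - y| :=
  abs_le'.2 ⟨clamp_sub_clamp_le (le_abs_self _) (abs_nonneg _),
    (neg_sub _ _).trans_le (clamp_sub_clamp_le (abs_sub_comm x y ▸ le_abs_self _) (abs_nonneg _))⟩

lemma measurable_clamp (k : ℕ) : Measurable (clamp k) :=
  measurable_const.max (measurable_const.min measurable_id)

lemma tendsto_clamp (x : ℝ) : Tendsto (fun k => clamp k x) atTop (𝓝 x) := by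
  refine tendsto_const_nhds.congr' ?_
  filter_upwards [tendsto_natCast_atTop_atTop.eventually_ge_atTop |x|] with k hk
  rw [clamp, min_eq_right ((le_abs_self x).trans hk), max_eq_right (abs_le.1 hk).1]

variable {Ω : Type*} [MeasurableSpace Ω] {μ : Measure Ω} [IsFiniteMeasure μ] {T : Ω → Ω}
  {f g : Ω → ℝ}

lemma integrable_clamp (hf : Measurable f) (k : ℕ) : Integrable (fun x => clamp k (f x)) μ :=
  .of_bound ((measurable_clamp k).comp hf).aestronglyMeasurable k
    (ae_of_all μ fun _ => abs_clamp_le k _)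

lemma integrable_clamp_comp_sub (hT : MeasurePreserving T μ μ) (hf : Measurable f) (k : ℕ) :
    Integrable (fun x => clamp k (f (T x)) - clamp k (f x)) μ :=
  (integrable_clamp (hf.comp hT.measurable) k).sub (integrable_clamp hf k)

lemma integral_clamp_comp_sub (hT : MeasurePreserving T μ μ) (hf : Measurable f) (k : ℕ) :
    ∫ x, (clamp k (f (T x)) - clamp k (f x)) ∂μ = 0 := by
  have h_inv : ∫ x, clamp k (f (T x)) ∂μ = ∫ x, clamp k (f x) ∂μ := by
    rw [← integral_map (f := fun x => clamp k (f x)) hT.measurable.aemeasurable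
      ((measurable_clamp k).comp hf).aestronglyMeasurable, hT.map_eq]
  have h_int : Integrable (fun x => clamp k (f (T x))) μ :=
    integrable_clamp (hf.comp hT.measurable) k
  rw [integral_sub h_int (integrable_clamp hf k), h_inv, sub_self]

-- A function of mean zero has `L¹` norm twice the integral of its positive part.
lemma integral_abs_clamp_comp_sub_le (hT : MeasurePreserving T μ μ) (hf : Measurable f)
    (hg : Integrable g μ) (hfg : ∀ᵐ x ∂μ, f (T x) - f x ≤ g x) (k : ℕ) :
    ∫ x, |clamp k (f (T x)) - clamp k (f x)| ∂μ ≤ 2 * ∫ x, |g x| ∂μ := by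
  have h_int := integrable_clamp_comp_sub hT hf k
  calc ∫ x, |clamp k (f (T x)) - clamp k (f x)| ∂μ
      ≤ ∫ x, (2 * |g x| - (clamp k (f (T x)) - clamp k (f x))) ∂μ := by
        refine integral_mono_ae h_int.abs ((hg.abs.const_mul 2).sub h_int) ?_
        filter_upwards [hfg] with x hx
        have h_le := clamp_sub_clamp_le (k := k) (hx.trans (le_abs_self _)) (abs_nonneg (g x))
        refine abs_le'.2 ⟨?_, ?_⟩ <;> linarith [abs_nonneg (g x)]
    _ = 2 * ∫ x, |g x| ∂μ := by
        rw [integral_sub (hg.abs.const_mul 2) h_int, integral_clamp_comp_sub hT hf, sub_zero,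
          integral_const_mul]

theorem integrable_comp_sub_of_le (hT : MeasurePreserving T μ μ) (hf : Measurable f)
    (hg : Integrable g μ) (hfg : ∀ᵐ x ∂μ, f (T x) - f x ≤ g x) :
    Integrable (fun x => f (T x) - f x) μ := by
  have h_bound (k : ℕ) : eLpNorm (fun x => clamp k (f (T x)) - clamp k (f x)) 1 μ ≤
      ENNReal.ofReal (2 * ∫ x, |g x| ∂μ) := by
    rw [eLpNorm_one_eq_lintegral_enorm,
      ← ofReal_integral_norm_eq_lintegral_enorm (integrable_clamp_comp_sub hT hf k)]
    exact ENNReal.ofReal_le_ofReal (integral_abs_clamp_comp_sub_le hT hf hg hfg k)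
  have h_lim : eLpNorm (fun x => f (T x) - f x) 1 μ ≤
      liminf (fun k => eLpNorm (fun x => clamp k (f (T x)) - clamp k (f x)) 1 μ) atTop :=
    Lp.eLpNorm_lim_le_liminf_eLpNorm
      (fun k => (integrable_clamp_comp_sub hT hf k).aestronglyMeasurable) _
      (ae_of_all μ fun _ => (tendsto_clamp _).sub (tendsto_clamp _))
  have h_liminf : liminf (fun k => eLpNorm (fun x => clamp k (f (T x)) - clamp k (f x)) 1 μ) atTop
      ≤ ENNReal.ofReal (2 * ∫ x, |g x| ∂μ) :=
    liminf_le_of_frequently_le' (Frequently.of_forall h_bound)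
  exact memLp_one_iff_integrable.1 ⟨((hf.comp hT.measurable).sub hf).aestronglyMeasurable,
    (h_lim.trans h_liminf).trans_lt ENNReal.ofReal_lt_top⟩

theorem integral_comp_sub_eq_zero (hT : MeasurePreserving T μ μ) (hf : Measurable f)
    (h_int : Integrable (fun x => f (T x) - f x) μ) : ∫ x, (f (T x) - f x) ∂μ = 0 := by
  have h_lim := tendsto_integral_of_dominated_convergence (fun x => |f (T x) - f x|)
    (fun k => (integrable_clamp_comp_sub hT hf k).aestronglyMeasurable) h_int.abs
    (fun k => ae_of_all μ fun x => abs_clamp_sub_clamp_le k _ _)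
    (ae_of_all μ fun _ => (tendsto_clamp _).sub (tendsto_clamp _))
  simp only [integral_clamp_comp_sub hT hf] at h_lim
  exact tendsto_nhds_unique h_lim tendsto_const_nhds

end Coboundary

section Interpolation

variable {t : ℕ → ℝ}

lemma exists_tendsto_forall_crossing (ht : Tendsto t atTop atTop) :
    ∃ m : ℝ → ℕ, Tendsto m atTop atTop ∧ ∀ᶠ s in atTop, t (m s) ≤ s ∧ s ≤ t (m s + 1) := by
  have h_exists (s : ℝ) : ∃ n, s < t n := (ht.eventually_gt_atTop s).exists
  have h_find (M : ℕ) : ∀ᶠ s in atTop, M < Nat.find (h_exists s) := by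
    filter_upwards [(Finset.range (M + 1)).eventually_all.2 fun i _ => eventually_ge_atTop (t i)]
      with s hs
    exact (Nat.lt_find_iff _ _).2 fun i hi => not_lt.2 (hs i (Finset.mem_range_succ_iff.2 hi))
  refine ⟨fun s => Nat.find (h_exists s) - 1, ?_, ?_⟩
  · exact tendsto_atTop.2 fun M => (h_find M).mono fun s hs => Nat.le_sub_one_of_lt hs
  · filter_upwards [h_find 0] with s hs
    refine ⟨not_lt.1 (Nat.find_min (h_exists s) (Nat.sub_one_lt_of_lt hs)), ?_⟩
    rw [Nat.sub_add_cancel hs]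
    exact (Nat.find_spec (h_exists s)).le

variable {U : ℝ → ℝ} {c χ : ℝ}

lemma tendsto_div_of_tendsto_div_natCast {u v : ℕ → ℝ} {k l : ℕ} (hχ : χ ≠ 0)
    (hu : Tendsto (fun n : ℕ => u n / n) atTop (𝓝 c))
    (hv : Tendsto (fun n : ℕ => v n / n) atTop (𝓝 χ)) :
    Tendsto (fun n => u (n + k) / v (n + l)) atTop (𝓝 (c / χ)) := by
  have h_shift (j : ℕ) : Tendsto (fun n : ℕ => ((n + j : ℕ) : ℝ) / n) atTop (𝓝 1) := by
    have h_add := (tendsto_const_div_atTop_nhds_zero_nat (j : ℝ)).const_add 1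
    rw [add_zero] at h_add
    refine h_add.congr' ?_
    filter_upwards [eventually_ne_atTop 0] with n hn
    rw [Nat.cast_add, add_div, div_self (Nat.cast_ne_zero.2 hn)]
  have h_u := ((tendsto_add_atTop_iff_nat k).2 hu).mul (h_shift k)
  have h_v := ((tendsto_add_atTop_iff_nat l).2 hv).mul (h_shift l)
  rw [mul_one] at h_u h_v
  refine (h_u.div h_v hχ).congr' ?_
  filter_upwards [eventually_ne_atTop 0] with n hn
  simp only [Pi.div_apply]
  field_simp

lemma tendsto_atTop_of_tendsto_div_natCast (hχ : 0 < χ)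
    (ht : Tendsto (fun n : ℕ => t n / n) atTop (𝓝 χ)) : Tendsto t atTop atTop := by
  refine (ht.pos_mul_atTop hχ tendsto_natCast_atTop_atTop).congr' ?_
  filter_upwards [eventually_ne_atTop 0] with n hn
  exact div_mul_cancel₀ _ (Nat.cast_ne_zero.2 hn)

theorem tendsto_div_atTop_of_tendsto_seq (hU : Monotone U) (hU_nonneg : ∀ s, 0 ≤ U s) (hχ : 0 < χ)
    (ht : Tendsto (fun n : ℕ => t n / n) atTop (𝓝 χ))
    (hUt : Tendsto (fun n : ℕ => U (t n) / n) atTop (𝓝 c)) :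
    Tendsto (fun s => U s / s) atTop (𝓝 (c / χ)) := by
  have ht_top := tendsto_atTop_of_tendsto_div_natCast hχ ht
  obtain ⟨m, hm, h_cross⟩ := exists_tendsto_forall_crossing ht_top
  have h_lower : Tendsto (fun s => U (t (m s)) / t (m s + 1)) atTop (𝓝 (c / χ)) :=
    (tendsto_div_of_tendsto_div_natCast (k := 0) (l := 1) hχ.ne' hUt ht).comp hm
  have h_upper : Tendsto (fun s => U (t (m s + 1)) / t (m s)) atTop (𝓝 (c / χ)) :=
    (tendsto_div_of_tendsto_div_natCast (k := 1) (l := 0) hχ.ne' hUt ht).comp hm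
  refine tendsto_of_tendsto_of_tendsto_of_le_of_le' h_lower h_upper ?_ ?_
  · filter_upwards [h_cross, eventually_gt_atTop 0] with s hs hs_pos
    exact div_le_div₀ (hU_nonneg s) (hU hs.1) hs_pos hs.2
  · filter_upwards [h_cross, (ht_top.comp hm).eventually_gt_atTop 0] with s hs ht_pos
    exact div_le_div₀ (hU_nonneg _) (hU hs.2) ht_pos hs.1

end Interpolation

section LogarithmicIntegral

variable {φ : ℝ → ℝ} {C s t : ℝ}

lemma integrableOn_const_mul_inv_Ioc (hs : 0 < s) : IntegrableOn (fun ε => C * ε⁻¹) (Ioc s t) := by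
  have h_cont : ContinuousOn (fun ε : ℝ => C * ε⁻¹) (Icc s t) :=
    continuousOn_const.mul (continuousOn_id.inv₀ fun ε hε => (hs.trans_le hε.1).ne')
  exact h_cont.integrableOn_Icc.mono_set Ioc_subset_Icc_self

lemma integrableOn_mul_inv_Ioc (hφ : Measurable φ) (hφC : ∀ ε > 0, φ ε ∈ Icc 0 C) (hs : 0 < s) :
    IntegrableOn (fun ε => φ ε * ε⁻¹) (Ioc s t) := by
  refine Integrable.mono' (integrableOn_const_mul_inv_Ioc (C := C) hs)
    (hφ.mul measurable_inv).aestronglyMeasurable ?_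
  filter_upwards [ae_restrict_mem measurableSet_Ioc] with ε hε
  have hε_pos : 0 < ε := hs.trans hε.1
  have h_inv : 0 ≤ ε⁻¹ := (inv_pos.2 hε_pos).le
  rw [Real.norm_of_nonneg (mul_nonneg (hφC ε hε_pos).1 h_inv)]
  exact mul_le_mul_of_nonneg_right (hφC ε hε_pos).2 h_inv

lemma setIntegral_mul_inv_Ioc_nonneg (hφ : ∀ ε > 0, 0 ≤ φ ε) (hs : 0 < s) :
    0 ≤ ∫ ε in Ioc s t, φ ε * ε⁻¹ :=
  setIntegral_nonneg measurableSet_Ioc fun ε hε =>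
    mul_nonneg (hφ ε (hs.trans hε.1)) (inv_pos.2 (hs.trans hε.1)).le

lemma setIntegral_mul_inv_Ioc_le_log (hφ : Measurable φ) (hφC : ∀ ε > 0, φ ε ∈ Icc 0 C)
    (hs : 0 < s) (hst : s ≤ t) : ∫ ε in Ioc s t, φ ε * ε⁻¹ ≤ C * Real.log (t / s) := by
  calc ∫ ε in Ioc s t, φ ε * ε⁻¹
      ≤ ∫ ε in Ioc s t, C * ε⁻¹ :=
        setIntegral_mono_on (integrableOn_mul_inv_Ioc hφ hφC hs) (integrableOn_const_mul_inv_Ioc hs)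
          measurableSet_Ioc fun ε hε => mul_le_mul_of_nonneg_right (hφC ε (hs.trans hε.1)).2
            (inv_pos.2 (hs.trans hε.1)).le
    _ = C * Real.log (t / s) := by
        rw [integral_const_mul, ← intervalIntegral.integral_of_le hst,
          integral_inv_of_pos hs (hs.trans_le hst)]

lemma setIntegral_mul_inv_Ioc_anti (hφ : Measurable φ) (hφC : ∀ ε > 0, φ ε ∈ Icc 0 C) (hs : 0 < s)
    {s' : ℝ} (hss' : s ≤ s') :
    ∫ ε in Ioc s' t, φ ε * ε⁻¹ ≤ ∫ ε in Ioc s t, φ ε * ε⁻¹ := by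
  refine setIntegral_mono_set (integrableOn_mul_inv_Ioc hφ hφC hs) ?_
    (Ioc_subset_Ioc_left hss').eventuallyLE
  filter_upwards [ae_restrict_mem measurableSet_Ioc] with ε hε
  exact mul_nonneg (hφC ε (hs.trans hε.1)).1 (inv_pos.2 (hs.trans hε.1)).le

-- The measure `dε / ε` is invariant under dilations.
lemma setIntegral_comp_div_mul_inv_Ioc {c : ℝ} (hc : 0 < c) (hst : s ≤ t) :
    ∫ ε in Ioc (c * s) (c * t), φ (ε / c) * ε⁻¹ = ∫ ε in Ioc s t, φ ε * ε⁻¹ := by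
  have h_integrand (ε : ℝ) : φ (ε / c) * ε⁻¹ = c⁻¹ * (φ (ε / c) * (ε / c)⁻¹) := by
    field_simp
  simp only [h_integrand]
  rw [integral_const_mul, ← intervalIntegral.integral_of_le (mul_le_mul_of_nonneg_left hst hc.le),
    intervalIntegral.integral_comp_div (f := fun ε => φ ε * ε⁻¹) hc.ne',
    mul_div_cancel_left₀ _ hc.ne', mul_div_cancel_left₀ _ hc.ne',
    intervalIntegral.integral_of_le hst, smul_eq_mul, inv_mul_cancel_left₀ hc.ne']

lemma measurable_setIntegral_Ioc {Ω : Type*} [MeasurableSpace Ω] {f : Ω → ℝ → ℝ}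
    (hf : Measurable (Function.uncurry f)) {lo hi : Ω → ℝ} (hlo : Measurable lo)
    (hhi : Measurable hi) : Measurable fun w => ∫ ε in Ioc (lo w) (hi w), f w ε := by
  have h_region : MeasurableSet {z : Ω × ℝ | lo z.1 < z.2 ∧ z.2 ≤ hi z.1} :=
    (measurableSet_lt (hlo.comp measurable_fst) measurable_snd).inter
      (measurableSet_le measurable_snd (hhi.comp measurable_fst))
  have h_int := (hf.indicator h_region).stronglyMeasurable.integral_prod_right' (ν := volume)
  convert h_int.measurable using 2 with w
  exact (integral_indicator measurableSet_Ioc).symm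

end LogarithmicIntegral

section Renormalization

variable {Ω : Type*} {T : Ω → Ω} {r ρ : Ω → ℝ} {f : Ω → ℝ → ℝ} {C : ℝ} {w : Ω}

/-- The `n`-th renormalization scale `r (w) r (T w) ⋯ r (Tⁿ⁻¹ w) ρ (Tⁿ w)` of the point `w`, where
`r` is the contraction ratio of one renormalization step and `ρ` the initial scale. -/
def renormScale (T : Ω → Ω) (r ρ : Ω → ℝ) : ℕ → Ω → ℝ
  | 0 => ρ
  | n + 1 => fun w => r w * renormScale T r ρ n (T w)

lemma renormScale_succ (n : ℕ) (w : Ω) :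
    renormScale T r ρ (n + 1) w = r w * renormScale T r ρ n (T w) := rfl

/-- A family `f w ε` of bounded nonnegative functions of the scale `ε` that is invariant under
renormalization: at every scale `ε ≤ r w * ρ (T w)` the point `w` looks like the point `T w` at
the scale `ε / r w`. -/
structure RenormInvariant [MeasurableSpace Ω] (T : Ω → Ω) (r ρ : Ω → ℝ) (f : Ω → ℝ → ℝ) (C : ℝ) :
    Prop where
  ratio_pos : ∀ w, 0 < r w
  measurable_ratio : Measurable r
  measurable_scale : Measurable ρ
  ratio_mul_scale_le : ∀ w, r w * ρ (T w) ≤ ρ w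
  measurable_uncurry : Measurable (Function.uncurry f)
  mem_Icc : ∀ w, ∀ ε > 0, f w ε ∈ Icc 0 C
  eq_renorm : ∀ w, ∀ ε > 0, ε ≤ r w * ρ (T w) → f w ε = f (T w) (ε / r w)

/-- The logarithmic length of the interval `(r w * ρ (T w), ρ w]` of scales passed in one
renormalization step. -/
noncomputable def renormTime (T : Ω → Ω) (r ρ : Ω → ℝ) (w : Ω) : ℝ :=
  Real.log (ρ w / (r w * ρ (T w)))

/-- The contribution to `∫ f w ε dε / ε` of the scales passed in one renormalization step. -/
noncomputable def renormGain (T : Ω → Ω) (r ρ : Ω → ℝ) (f : Ω → ℝ → ℝ) (w : Ω) : ℝ :=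
  ∫ ε in Ioc (r w * ρ (T w)) (ρ w), f w ε * ε⁻¹

lemma renormTime_eq (hr : ∀ w, 0 < r w) (hρ : ∀ k, 0 < ρ (T^[k] w)) :
    renormTime T r ρ w = Real.log (r w)⁻¹ - (Real.log (ρ (T w)) - Real.log (ρ w)) := by
  have hρ_w : 0 < ρ w := hρ 0
  have hρ_T : 0 < ρ (T w) := hρ 1
  rw [renormTime, Real.log_div hρ_w.ne' (mul_pos (hr w) hρ_T).ne',
    Real.log_mul (hr w).ne' hρ_T.ne', Real.log_inv]
  ring

lemma renormScale_pos (hr : ∀ w, 0 < r w) (hρ : ∀ k, 0 < ρ (T^[k] w)) (n : ℕ) :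
    0 < renormScale T r ρ n w := by
  induction n generalizing w with
  | zero => exact hρ 0
  | succ n ih => exact mul_pos (hr w) (ih fun k => hρ (k + 1))

lemma neg_log_renormScale (hr : ∀ w, 0 < r w) (hρ : ∀ k, 0 < ρ (T^[k] w)) (n : ℕ) :
    -Real.log (renormScale T r ρ n w) = birkhoffSum T (renormTime T r ρ) n w - Real.log (ρ w) := by
  induction n generalizing w with
  | zero => rw [birkhoffSum_zero, zero_sub, renormScale]
  | succ n ih =>
    have hρ' : ∀ k, 0 < ρ (T^[k] (T w)) := fun k => hρ (k + 1)
    have ih' := ih hρ'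
    rw [renormScale_succ, birkhoffSum_succ', Real.log_mul (hr w).ne' (renormScale_pos hr hρ' n).ne',
      renormTime_eq hr hρ, Real.log_inv]
    linarith

variable [MeasurableSpace Ω]

namespace RenormInvariant

lemma measurable_section (h : RenormInvariant T r ρ f C) (w : Ω) : Measurable (f w) :=
  h.measurable_uncurry.comp measurable_prodMk_left

lemma renormScale_le (h : RenormInvariant T r ρ f C) (n : ℕ) (w : Ω) :
    renormScale T r ρ n w ≤ ρ w := by
  induction n generalizing w with
  | zero => exact le_rfl
  | succ n ih =>
    exact (mul_le_mul_of_nonneg_left (ih (T w)) (h.ratio_pos w).le).trans (h.ratio_mul_scale_le w)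

lemma setIntegral_renormScale (h : RenormInvariant T r ρ f C) (hρ : ∀ k, 0 < ρ (T^[k] w)) (n : ℕ) :
    ∫ ε in Ioc (renormScale T r ρ n w) (ρ w), f w ε * ε⁻¹ =
      birkhoffSum T (renormGain T r ρ f) n w := by
  induction n generalizing w with
  | zero => rw [birkhoffSum_zero, renormScale, Ioc_self, setIntegral_empty]
  | succ n ih =>
    have hρ' : ∀ k, 0 < ρ (T^[k] (T w)) := fun k => hρ (k + 1)
    have h_pos : 0 < r w * renormScale T r ρ n (T w) :=
      mul_pos (h.ratio_pos w) (renormScale_pos h.ratio_pos hρ' n)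
    have h_le : r w * renormScale T r ρ n (T w) ≤ r w * ρ (T w) :=
      mul_le_mul_of_nonneg_left (h.renormScale_le n (T w)) (h.ratio_pos w).le
    have h_integrable {s t : ℝ} (hs : 0 < s) :=
      integrableOn_mul_inv_Ioc (t := t) (h.measurable_section w) (h.mem_Icc w) hs
    have h_renorm : ∫ ε in Ioc (r w * renormScale T r ρ n (T w)) (r w * ρ (T w)), f w ε * ε⁻¹ =
        ∫ ε in Ioc (renormScale T r ρ n (T w)) (ρ (T w)), f (T w) ε * ε⁻¹ := by
      rw [← setIntegral_comp_div_mul_inv_Ioc (h.ratio_pos w) (h.renormScale_le n (T w))]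
      refine setIntegral_congr_fun measurableSet_Ioc fun ε hε => ?_
      simp only [h.eq_renorm w ε (h_pos.trans hε.1) hε.2]
    rw [birkhoffSum_succ', ← ih hρ', ← h_renorm, renormGain, renormScale_succ,
      ← Ioc_union_Ioc_eq_Ioc h_le (h.ratio_mul_scale_le w),
      setIntegral_union (Ioc_disjoint_Ioc_of_le le_rfl) measurableSet_Ioc (h_integrable h_pos)
        (h_integrable (h_pos.trans_le h_le)), add_comm]

lemma measurable_renormGain (h : RenormInvariant T r ρ f C) (hT : Measurable T) :
    Measurable (renormGain T r ρ f) :=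
  measurable_setIntegral_Ioc (h.measurable_uncurry.mul measurable_snd.inv)
    (h.measurable_ratio.mul (h.measurable_scale.comp hT)) h.measurable_scale

lemma norm_renormGain_le (h : RenormInvariant T r ρ f C) (hρ : 0 < ρ (T w)) :
    ‖renormGain T r ρ f w‖ ≤ C * renormTime T r ρ w := by
  have h_pos : 0 < r w * ρ (T w) := mul_pos (h.ratio_pos w) hρ
  rw [renormGain, Real.norm_of_nonneg
    (setIntegral_mul_inv_Ioc_nonneg (fun ε hε => (h.mem_Icc w ε hε).1) h_pos)]
  exact setIntegral_mul_inv_Ioc_le_log (h.measurable_section w) (h.mem_Icc w) h_pos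
    (h.ratio_mul_scale_le w)

lemma tendsto_logAverage_of_tendsto_birkhoffAverage (h : RenormInvariant T r ρ f C)
    (hρ : ∀ k, 0 < ρ (T^[k] w)) {c χ : ℝ} (hχ : 0 < χ)
    (h_time : Tendsto (fun n => birkhoffAverage ℝ T (renormTime T r ρ) n w) atTop (𝓝 χ))
    (h_gain : Tendsto (fun n => birkhoffAverage ℝ T (renormGain T r ρ f) n w) atTop (𝓝 c)) :
    Tendsto (fun δ => (Real.log δ⁻¹)⁻¹ * ∫ ε in Ioc δ (ρ w), f w ε * ε⁻¹) (𝓝[>] 0)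
      (𝓝 (χ⁻¹ * c)) := by
  have h_time' : Tendsto (fun n : ℕ => -Real.log (renormScale T r ρ n w) / n) atTop (𝓝 χ) := by
    have h_sub := h_time.sub (tendsto_const_div_atTop_nhds_zero_nat (Real.log (ρ w)))
    rw [sub_zero] at h_sub
    refine h_sub.congr fun n => ?_
    rw [neg_log_renormScale h.ratio_pos hρ, sub_div, birkhoffAverage, smul_eq_mul, inv_mul_eq_div]
  have h_gain' : Tendsto (fun n : ℕ => (∫ ε in Ioc
      (Real.exp (-(-Real.log (renormScale T r ρ n w)))) (ρ w), f w ε * ε⁻¹) / n) atTop (𝓝 c) := by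
    refine h_gain.congr fun n => ?_
    rw [neg_neg, Real.exp_log (renormScale_pos h.ratio_pos hρ n), h.setIntegral_renormScale hρ,
      birkhoffAverage, smul_eq_mul, div_eq_inv_mul]
  have h_lim := tendsto_div_atTop_of_tendsto_seq (t := fun n => -Real.log (renormScale T r ρ n w))
    (U := fun s => ∫ ε in Ioc (Real.exp (-s)) (ρ w), f w ε * ε⁻¹)
    (fun s s' hss' => setIntegral_mul_inv_Ioc_anti (h.measurable_section w) (h.mem_Icc w)
      (Real.exp_pos _) (Real.exp_le_exp.2 (neg_le_neg hss')))
    (fun s => setIntegral_mul_inv_Ioc_nonneg (fun ε hε => (h.mem_Icc w ε hε).1) (Real.exp_pos _))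
    hχ h_time' h_gain'
  rw [← div_eq_inv_mul]
  refine (h_lim.comp (Real.tendsto_log_atTop.comp tendsto_inv_nhdsGT_zero)).congr' ?_
  filter_upwards [self_mem_nhdsWithin] with δ (hδ : 0 < δ)
  simp only [Function.comp_apply, Real.log_inv, neg_neg, Real.exp_log hδ, div_eq_inv_mul]

variable {ν : Measure Ω}

section IsFiniteMeasure

variable [IsFiniteMeasure ν]

-- The set `{ρ > 0}` contains its preimage under `T`, so it is null or conull by ergodicity.
lemma ae_forall_iterate_pos (h : RenormInvariant T r ρ f C) (hT : Ergodic T ν)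
    (hρ : ν {w | 0 < ρ w} ≠ 0) : ∀ᵐ w ∂ν, ∀ k, 0 < ρ (T^[k] w) := by
  have h_meas : MeasurableSet {w | 0 < ρ w} := measurableSet_lt measurable_const h.measurable_scale
  have h_sub : T ⁻¹' {w | 0 < ρ w} ⊆ {w | 0 < ρ w} := fun w hw =>
    (mul_pos (h.ratio_pos w) hw).trans_le (h.ratio_mul_scale_le w)
  have h_pos : ∀ᵐ w ∂ν, 0 < ρ w := by
    rcases hT.ae_empty_or_univ_of_preimage_ae_le h_meas.nullMeasurableSet h_sub.eventuallyLE
      with h_null | h_univ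
    · exact absurd (ae_eq_empty.1 h_null) hρ
    · exact eventuallyEq_univ.1 h_univ
  exact ae_all_iff.2 fun k => (hT.toMeasurePreserving.iterate k).quasiMeasurePreserving.ae h_pos

lemma integrable_log_scale_comp_sub (h : RenormInvariant T r ρ f C) (hT : MeasurePreserving T ν ν)
    (h_pos : ∀ᵐ w ∂ν, ∀ k, 0 < ρ (T^[k] w)) (hr : Integrable (fun w => Real.log (r w)⁻¹) ν) :
    Integrable (fun w => Real.log (ρ (T w)) - Real.log (ρ w)) ν := by
  refine integrable_comp_sub_of_le (f := fun w => Real.log (ρ w)) hT h.measurable_scale.log hr ?_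
  filter_upwards [h_pos] with w hw
  have hρ_T : 0 < ρ (T w) := hw 1
  have h_log := Real.log_le_log (mul_pos (h.ratio_pos w) hρ_T) (h.ratio_mul_scale_le w)
  rw [Real.log_mul (h.ratio_pos w).ne' hρ_T.ne'] at h_log
  rw [Real.log_inv]
  linarith

lemma integrable_renormTime (h : RenormInvariant T r ρ f C) (hT : MeasurePreserving T ν ν)
    (h_pos : ∀ᵐ w ∂ν, ∀ k, 0 < ρ (T^[k] w)) (hr : Integrable (fun w => Real.log (r w)⁻¹) ν) :
    Integrable (renormTime T r ρ) ν :=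
  (hr.sub (h.integrable_log_scale_comp_sub hT h_pos hr)).congr
    (h_pos.mono fun _ hw => (renormTime_eq h.ratio_pos hw).symm)

lemma integral_renormTime (h : RenormInvariant T r ρ f C) (hT : MeasurePreserving T ν ν)
    (h_pos : ∀ᵐ w ∂ν, ∀ k, 0 < ρ (T^[k] w)) (hr : Integrable (fun w => Real.log (r w)⁻¹) ν) :
    ∫ w, renormTime T r ρ w ∂ν = ∫ w, Real.log (r w)⁻¹ ∂ν := by
  have h_cob := h.integrable_log_scale_comp_sub hT h_pos hr
  rw [integral_congr_ae (h_pos.mono fun _ hw => renormTime_eq h.ratio_pos hw),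
    integral_sub hr h_cob, integral_comp_sub_eq_zero (f := fun w => Real.log (ρ w)) hT
      h.measurable_scale.log h_cob, sub_zero]

lemma integrable_renormGain (h : RenormInvariant T r ρ f C) (hT : MeasurePreserving T ν ν)
    (h_pos : ∀ᵐ w ∂ν, ∀ k, 0 < ρ (T^[k] w)) (hr : Integrable (fun w => Real.log (r w)⁻¹) ν) :
    Integrable (renormGain T r ρ f) ν :=
  ((h.integrable_renormTime hT h_pos hr).const_mul C).mono'
    (h.measurable_renormGain hT.measurable).aestronglyMeasurable
    (h_pos.mono fun _ hw => h.norm_renormGain_le (hw 1))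

end IsFiniteMeasure

theorem ae_tendsto_logAverage [IsProbabilityMeasure ν] (h : RenormInvariant T r ρ f C)
    (hT : Ergodic T ν) (hρ : ν {w | 0 < ρ w} ≠ 0) (hr : Integrable (fun w => Real.log (r w)⁻¹) ν)
    (hr_pos : 0 < ∫ w, Real.log (r w)⁻¹ ∂ν) :
    ∀ᵐ w ∂ν, Tendsto (fun δ => (Real.log δ⁻¹)⁻¹ * ∫ ε in Ioc δ (ρ w), f w ε * ε⁻¹) (𝓝[>] 0)
      (𝓝 ((∫ v, Real.log (r v)⁻¹ ∂ν)⁻¹ * ∫ v, renormGain T r ρ f v ∂ν)) := by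
  have h_mp := hT.toMeasurePreserving
  have h_pos := h.ae_forall_iterate_pos hT hρ
  have h_time := ae_tendsto_birkhoffAverage hT (h.integrable_renormTime h_mp h_pos hr)
  rw [h.integral_renormTime h_mp h_pos hr] at h_time
  filter_upwards [h_pos, h_time, ae_tendsto_birkhoffAverage hT
    (h.integrable_renormGain h_mp h_pos hr)] with w hw h_time_w h_gain_w
  exact h.tendsto_logAverage_of_tendsto_birkhoffAverage hw hr_pos h_time_w h_gain_w

end RenormInvariant

end Renormalization

section Shift

open ProbabilityTheory

variable {X : Type*}

/-- The left shift on sequences. -/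
def shift (w : ℕ → X) : ℕ → X := fun n => w (n + 1)

lemma shift_iterate_apply (n k : ℕ) (w : ℕ → X) : shift^[n] w k = w (k + n) := by
  induction n generalizing w with
  | zero => rfl
  | succ n ih => rw [Function.iterate_succ_apply, ih, shift, add_assoc]

variable [MeasurableSpace X]

lemma measurable_shift : Measurable (shift (X := X)) :=
  measurable_pi_lambda _ fun n => measurable_pi_apply (n + 1)

lemma measurable_shift_iterate_tail (n : ℕ) :
    Measurable[⨆ i ≥ n, MeasurableSpace.comap (fun w : ℕ → X => w i) ‹_›]
      (shift^[n] : (ℕ → X) → ℕ → X) := by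
  refine (@measurable_pi_iff _ _ _ (_) _ _).2 fun k => ?_
  simp only [shift_iterate_apply]
  exact Measurable.mono (comap_measurable fun w : ℕ → X => w (k + n))
    (le_iSup₂_of_le (k + n) (Nat.le_add_left n k) le_rfl) le_rfl

-- A shift-invariant event equals its preimage under every iterate, hence is a tail event.
lemma measurableSet_limsup_of_preimage_shift_eq {A : Set (ℕ → X)} (hA : MeasurableSet A)
    (hA_inv : shift ⁻¹' A = A) :
    MeasurableSet[limsup (fun i => MeasurableSpace.comap (fun w : ℕ → X => w i) ‹_›) atTop] A := by
  rw [limsup_eq_iInf_iSup_of_nat, MeasurableSpace.measurableSet_iInf]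
  intro n
  have h_iter : shift^[n] ⁻¹' A = A := by
    rw [preimage_iterate_eq, Function.iterate_fixed hA_inv]
  rw [← h_iter]
  exact measurable_shift_iterate_tail n hA

variable (μ : Measure X) [IsProbabilityMeasure μ]

lemma iIndepFun_eval_infinitePi :
    iIndepFun (fun (n : ℕ) (w : ℕ → X) => w n) (Measure.infinitePi fun _ => μ) :=
  iIndepFun_infinitePi (X := fun _ x => x) fun _ => measurable_id

lemma measurePreserving_shift_infinitePi :
    MeasurePreserving (shift (X := X)) (.infinitePi fun _ => μ) (.infinitePi fun _ => μ) := by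
  refine ⟨measurable_shift, ?_⟩
  have h_indep := (iIndepFun_eval_infinitePi μ).precomp (add_left_injective 1)
  have h_map := (iIndepFun_iff_map_fun_eq_infinitePi_map fun n =>
    measurable_pi_apply (n + 1)).1 h_indep
  simp only [Measure.infinitePi_map_eval] at h_map
  exact h_map

theorem ergodic_shift_infinitePi : Ergodic (shift (X := X)) (.infinitePi fun _ => μ) := by
  refine ⟨measurePreserving_shift_infinitePi μ, ⟨fun A hA hA_inv => ?_⟩⟩
  refine eventuallyConst_set'.2 ?_
  rcases measure_zero_or_one_of_measurableSet_limsup_atTop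
    (fun n => (measurable_pi_apply n).comap_le) (iIndepFun_eval_infinitePi μ).iIndep
    (measurableSet_limsup_of_preimage_shift_eq hA hA_inv) with h_zero | h_one
  · exact .inl (ae_eq_empty.2 h_zero)
  · exact .inr (eventuallyEq_univ.2 ((prob_compl_eq_zero_iff hA).2 h_one))

end Shift

section Bernoulli

variable {X : Type*}

lemma isPiSystem_cylinder : IsPiSystem {A : Set (ℕ → X) | ∃ w n, A = PiNat.cylinder w n} := by
  rintro _ ⟨v, m, rfl⟩ _ ⟨w, n, rfl⟩ ⟨x, hxv, hxw⟩
  refine ⟨x, max m n, ?_⟩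
  rw [← PiNat.mem_cylinder_iff_eq.1 hxv, ← PiNat.mem_cylinder_iff_eq.1 hxw]
  ext y
  simp only [mem_inter_iff, PiNat.mem_cylinder_iff, lt_max_iff]
  grind

variable [MeasurableSpace X]

/-- `ν` is the Bernoulli measure on sequences with weights `p`, described by its values on
cylinders. -/
def IsBernoulli (ν : Measure (ℕ → X)) (p : X → ℝ≥0∞) : Prop :=
  ∀ w n, ν (PiNat.cylinder w n) = ∏ i ∈ Finset.range n, p (w i)

variable {ν : Measure (ℕ → X)} {p : X → ℝ≥0∞}

lemma isBernoulli_of_measure_setOf_eq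
    (hν : ∀ (n : ℕ) (u : Fin n → X), ν {w | ∀ i : Fin n, w i = u i} = ∏ i, p (u i)) :
    IsBernoulli ν p := by
  intro w n
  rw [Finset.prod_range, ← hν n fun i => w i]
  congr 1
  ext v
  exact ⟨fun h i => h i i.2, fun h i hi => h ⟨i, hi⟩⟩

lemma IsBernoulli.measure_ne_zero_of_isOpen [TopologicalSpace X] [DiscreteTopology X]
    (hp : ∀ x, p x ≠ 0) (hν : IsBernoulli ν p) {U : Set (ℕ → X)} (hU : IsOpen U)
    (hU_ne : U.Nonempty) : ν U ≠ 0 := by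
  obtain ⟨w, hw⟩ := hU_ne
  obtain ⟨_, ⟨v, n, rfl⟩, -, h_sub⟩ :=
    (PiNat.isTopologicalBasis_cylinders fun _ => X).exists_subset_of_mem_open hw hU
  have h_cyl : ν (PiNat.cylinder v n) ≠ 0 := by
    rw [hν]
    exact Finset.prod_ne_zero_iff.2 fun i _ => hp (v i)
  exact fun h_zero => h_cyl (measure_mono_null h_sub h_zero)

variable [MeasurableSingletonClass X]

lemma generateFrom_cylinder [Finite X] :
    MeasurableSpace.pi =
      MeasurableSpace.generateFrom {A : Set (ℕ → X) | ∃ w n, A = PiNat.cylinder w n} := by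
  let _ : TopologicalSpace X := ⊥
  have : DiscreteTopology X := ⟨rfl⟩
  rw [BorelSpace.measurable_eq (α := ℕ → X),
    (PiNat.isTopologicalBasis_cylinders fun _ => X).borel_eq_generateFrom]

lemma IsBernoulli.map_eval_zero_singleton (hν : IsBernoulli ν p) (x : X) :
    ν.map (fun w => w 0) {x} = p x := by
  have h_cyl : (fun w : ℕ → X => w 0) ⁻¹' {x} = PiNat.cylinder (fun _ => x) 1 := by
    ext w
    simp [PiNat.mem_cylinder_iff]
  rw [Measure.map_apply (measurable_pi_apply 0) (measurableSet_singleton x), h_cyl, hν,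
    Finset.prod_range_one]

variable [IsProbabilityMeasure ν]

lemma IsBernoulli.eq_infinitePi [Finite X] (hν : IsBernoulli ν p) :
    ν = .infinitePi fun _ => ν.map fun w => w 0 := by
  have : IsProbabilityMeasure (ν.map fun w => w 0) :=
    Measure.isProbabilityMeasure_map (measurable_pi_apply 0).aemeasurable
  refine ext_of_generate_finite _ generateFrom_cylinder isPiSystem_cylinder ?_ (by simp)
  rintro _ ⟨w, n, rfl⟩
  rw [hν, PiNat.cylinder_eq_pi, Measure.infinitePi_pi _ fun i _ => measurableSet_singleton _]
  exact Finset.prod_congr rfl fun i _ => (hν.map_eval_zero_singleton (w i)).symm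

theorem IsBernoulli.ergodic_shift [Finite X] (hν : IsBernoulli ν p) : Ergodic shift ν := by
  have : IsProbabilityMeasure (ν.map fun w => w 0) :=
    Measure.isProbabilityMeasure_map (measurable_pi_apply 0).aemeasurable
  rw [hν.eq_infinitePi]
  exact ergodic_shift_infinitePi _

lemma IsBernoulli.integral_comp_eval_zero [Fintype X] (hν : IsBernoulli ν p) (g : X → ℝ) :
    ∫ w, g (w 0) ∂ν = ∑ x, (p x).toReal * g x := by
  have : IsProbabilityMeasure (ν.map fun w => w 0) :=
    Measure.isProbabilityMeasure_map (measurable_pi_apply 0).aemeasurable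
  rw [← integral_map (φ := fun w : ℕ → X => w 0) (f := g) (measurable_pi_apply 0).aemeasurable
    (measurable_of_countable g).aestronglyMeasurable, integral_fintype .of_finite]
  simp only [Measure.real, hν.map_eval_zero_singleton, smul_eq_mul]

end Bernoulli

section Similarity

lemma infDist_image_of_dist_eq_mul {X Y : Type*} [PseudoMetricSpace X] [PseudoMetricSpace Y]
    {S : X → Y} {r : ℝ} (hr : 0 ≤ r) (hS : ∀ x y, dist (S x) (S y) = r * dist x y) (x : X)
    (B : Set X) : infDist (S x) (S '' B) = r * infDist x B := by
  rw [infDist_eq_iInf, infDist_eq_iInf, Real.mul_iInf_of_nonneg hr,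
    ← imageFactorization_surjective.iInf_comp]
  exact iInf_congr fun y => hS x y

open scoped Pointwise

variable {E : Type*} [NormedAddCommGroup E] [InnerProductSpace ℝ E] [FiniteDimensional ℝ E]
  {S : E → E} {r : ℝ}

lemma exists_linearIsometryEquiv_of_dist_eq_mul (hr : 0 < r)
    (hS : ∀ x y, dist (S x) (S y) = r * dist x y) :
    ∃ L : E ≃ₗᵢ[ℝ] E, ∀ x, S x = r • L x + S 0 := by
  have h_isom : Isometry fun x => r⁻¹ • S x := by
    refine Isometry.of_dist_eq fun x y => ?_
    rw [dist_smul₀, hS, norm_inv, Real.norm_eq_abs, abs_of_pos hr, inv_mul_cancel_left₀ hr.ne']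
  refine ⟨h_isom.affineIsometryOfStrictConvexSpace.linearIsometry.toLinearIsometryEquiv rfl,
    fun x => ?_⟩
  have h_affine := h_isom.affineIsometryOfStrictConvexSpace.map_vadd 0 x
  simp only [vadd_eq_add, add_zero, Isometry.coe_affineIsometryOfStrictConvexSpace] at h_affine
  rw [LinearIsometry.coe_toLinearIsometryEquiv, ← smul_inv_smul₀ hr.ne' (S x), h_affine, smul_add,
    smul_inv_smul₀ hr.ne']

lemma exists_homeomorph_of_dist_eq_mul (hr : 0 < r)
    (hS : ∀ x y, dist (S x) (S y) = r * dist x y) : ∃ e : E ≃ₜ E, ⇑e = S := by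
  obtain ⟨L, hL⟩ := exists_linearIsometryEquiv_of_dist_eq_mul hr hS
  exact ⟨(L.toHomeomorph.trans (Homeomorph.smulOfNeZero r hr.ne')).trans
    (Homeomorph.addRight (S 0)), funext fun x => (hL x).symm⟩

lemma volume_image_of_dist_eq_mul [MeasurableSpace E] [BorelSpace E] (hr : 0 < r)
    (hS : ∀ x y, dist (S x) (S y) = r * dist x y) (A : Set E) :
    volume (S '' A) = ENNReal.ofReal (r ^ Module.finrank ℝ E) * volume A := by
  obtain ⟨L, hL⟩ := exists_linearIsometryEquiv_of_dist_eq_mul hr hS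
  have h_image : S '' A = (fun x => x + S 0) '' (r • (L '' A)) := by
    rw [← image_smul, image_image, image_image]
    exact image_congr fun x _ => hL x
  have h_isom : volume (L '' A) = volume A := by
    rw [L.image_eq_preimage_symm]
    exact L.symm.measurePreserving.measure_preimage_equiv (f := L.symm.toMeasurableEquiv) A
  rw [h_image, image_add_right, measure_preimage_add_right, Measure.addHaar_smul, h_isom,
    abs_of_pos (pow_pos hr _)]

end Similarity

section ParallelDensity

lemma cthickening_inter_closedBall_image {X Y : Type*} [PseudoMetricSpace X] [PseudoMetricSpace Y]
    {S : X → Y} {r : ℝ} (hr : 0 < r) (hS : ∀ x y, dist (S x) (S y) = r * dist x y)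
    (hS_surj : Function.Surjective S) {F : Set X} {G : Set Y} (hF : IsCompact F) (hG : IsCompact G)
    (hFG : S '' F ⊆ G) {x : X} {R a ε : ℝ} (h_local : G ∩ ball (S x) R ⊆ S '' F) (hε : 0 < ε)
    (hεR : (a + 1) * ε < R) :
    cthickening ε G ∩ closedBall (S x) (a * ε) =
      S '' (cthickening (ε / r) F ∩ closedBall x (a * (ε / r))) := by
  have h_dist : ∀ {t} y z, dist (S y) (S z) ≤ t ↔ dist y z ≤ t / r := fun y z => by
    rw [hS, le_div_iff₀' hr]
  rw [hG.cthickening_eq_biUnion_closedBall hε.le,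
    hF.cthickening_eq_biUnion_closedBall (div_pos hε hr).le, ← mul_div_assoc]
  ext y
  obtain ⟨y, rfl⟩ := hS_surj y
  simp only [mem_inter_iff, mem_iUnion, mem_closedBall, mem_image, exists_prop]
  constructor
  · rintro ⟨⟨z, hzG, hyz⟩, hyx⟩
    have hz_ball : z ∈ ball (S x) R := by
      rw [mem_ball]
      linarith [dist_triangle_left z (S x) (S y)]
    obtain ⟨z, hzF, rfl⟩ := h_local ⟨hzG, hz_ball⟩
    exact ⟨y, ⟨⟨z, hzF, (h_dist y z).1 hyz⟩, (h_dist y x).1 hyx⟩, rfl⟩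
  · rintro ⟨y', ⟨⟨z, hzF, hyz⟩, hyx⟩, hy⟩
    rw [← hy]
    exact ⟨⟨S z, hFG (mem_image_of_mem S hzF), (h_dist y' z).2 hyz⟩, (h_dist y' x).2 hyx⟩

variable {E : Type*} [NormedAddCommGroup E] [InnerProductSpace ℝ E] [FiniteDimensional ℝ E]
  [MeasurableSpace E] [BorelSpace E]

/-- The density `ε⁻ᵈ λ_d (F(ε) ∩ B(x, a ε))` of the `ε`-parallel set of `F` near the point `x`,
where `d` is the dimension of the ambient space. -/
noncomputable def parallelDensity (F : Set E) (a : ℝ) (x : E) (ε : ℝ) : ℝ :=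
  ε ^ (-(Module.finrank ℝ E : ℝ)) * (volume (cthickening ε F ∩ closedBall x (a * ε))).toReal

lemma measurable_uncurry_parallelDensity (F : Set E) (a : ℝ) :
    Measurable (Function.uncurry (parallelDensity F a)) := by
  have h_closed : IsClosed {z : (E × ℝ) × E |
      z.2 ∈ cthickening z.1.2 F ∩ closedBall z.1.1 (a * z.1.2)} :=
    (isClosed_le (continuous_infEDist.comp continuous_snd)
      (ENNReal.continuous_ofReal.comp (by fun_prop))).inter
      (isClosed_le (by fun_prop) (by fun_prop))
  have h_volume := measurable_measure_prodMk_left (ν := (volume : Measure E)) h_closed.measurableSet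
  exact (measurable_snd.pow_const _).mul h_volume.ennreal_toReal

lemma parallelDensity_mem_Icc (F : Set E) {a : ℝ} (ha : 0 ≤ a) (x : E) {ε : ℝ} (hε : 0 < ε) :
    parallelDensity F a x ε ∈
      Icc 0 (a ^ Module.finrank ℝ E * (volume (ball (0 : E) 1)).toReal) := by
  refine ⟨mul_nonneg (Real.rpow_nonneg hε.le _) ENNReal.toReal_nonneg, ?_⟩
  have h_ball : (volume (cthickening ε F ∩ closedBall x (a * ε))).toReal ≤
      (a * ε) ^ Module.finrank ℝ E * (volume (ball (0 : E) 1)).toReal := by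
    have h_vol := Measure.addHaar_closedBall volume x (mul_nonneg ha hε.le)
    refine (measureReal_mono inter_subset_right measure_closedBall_lt_top.ne).trans_eq ?_
    rw [measureReal_def, h_vol, ENNReal.toReal_mul, ENNReal.toReal_ofReal (by positivity)]
  calc parallelDensity F a x ε
      ≤ ε ^ (-(Module.finrank ℝ E : ℝ)) *
          ((a * ε) ^ Module.finrank ℝ E * (volume (ball (0 : E) 1)).toReal) := by
        unfold parallelDensity
        gcongr
    _ = a ^ Module.finrank ℝ E * (volume (ball (0 : E) 1)).toReal := by
        rw [Real.rpow_neg hε.le, Real.rpow_natCast, mul_pow]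
        field_simp

lemma parallelDensity_image {S : E → E} {r : ℝ} (hr : 0 < r)
    (hS : ∀ x y, dist (S x) (S y) = r * dist x y) {F : Set E} (hF : IsCompact F)
    (hFS : S '' F ⊆ F) {x : E} {R a ε : ℝ} (h_local : F ∩ ball (S x) R ⊆ S '' F) (hε : 0 < ε)
    (hεR : (a + 1) * ε < R) :
    parallelDensity F a (S x) ε = parallelDensity F a x (ε / r) := by
  obtain ⟨e, rfl⟩ := exists_homeomorph_of_dist_eq_mul hr hS
  rw [parallelDensity, parallelDensity,
    cthickening_inter_closedBall_image hr hS e.surjective hF hF hFS h_local hε hεR,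
    volume_image_of_dist_eq_mul hr hS, ENNReal.toReal_mul, ENNReal.toReal_ofReal (by positivity),
    Real.rpow_neg hε.le, Real.rpow_neg (by positivity), Real.rpow_natCast, Real.rpow_natCast,
    div_pow]
  field_simp

end ParallelDensity

section IteratedFunctionSystem

open scoped NNReal

variable {E ι : Type*}

lemma exists_lipschitzWith_lt_one [PseudoMetricSpace E] [Finite ι] {S : ι → E → E} {r : ι → ℝ}
    (hr : ∀ i, r i < 1) (hS : ∀ i x y, dist (S i x) (S i y) = r i * dist x y) :
    ∃ q : ℝ≥0, q < 1 ∧ ∀ i, LipschitzWith q (S i) := by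
  have := Fintype.ofFinite ι
  refine ⟨Finset.univ.sup fun i => (r i).toNNReal, ?_, fun i => ?_⟩
  · exact (Finset.sup_lt_iff zero_lt_one).2 fun i _ => Real.toNNReal_lt_one.2 (hr i)
  · have h_lip : LipschitzWith (r i).toNNReal (S i) :=
      LipschitzWith.of_dist_le_mul fun x y => (hS i x y).trans_le <|
        mul_le_mul_of_nonneg_right (Real.le_coe_toNNReal _) dist_nonneg
    exact h_lip.weaken (Finset.le_sup (f := fun i => (r i).toNNReal) (Finset.mem_univ i))

lemma tendsto_pow_mul_nhds_zero {q : ℝ≥0} (hq : q < 1) (M : ℝ) :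
    Tendsto (fun n : ℕ => (q : ℝ) ^ n * M) atTop (𝓝 0) := by
  simpa using (tendsto_pow_atTop_nhds_zero_of_lt_one q.2 hq).mul_const M

section PseudoMetric

variable [PseudoMetricSpace E] {S : ι → E → E} {q : ℝ≥0} {F K : Set E} {π : (ℕ → ι) → E}

lemma subset_of_subset_iUnion_image (hq : q < 1) (hS : ∀ i, LipschitzWith q (S i))
    (hF_bdd : Bornology.IsBounded F) (hF : F ⊆ ⋃ i, S i '' F) (hK_closed : IsClosed K)
    (hK_ne : K.Nonempty) (hK : ∀ i, S i '' K ⊆ K) : F ⊆ K := by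
  obtain ⟨z, hz⟩ := hK_ne
  obtain ⟨M, hM⟩ := hF_bdd.subset_closedBall z
  have h_approx : ∀ n : ℕ, ∀ x ∈ F, ∃ y ∈ K, dist x y ≤ q ^ n * M := by
    intro n
    induction n with
    | zero => exact fun x hx => ⟨z, hz, by simpa using hM hx⟩
    | succ n ih =>
      intro x hx
      obtain ⟨i, x, hxF, rfl⟩ := mem_iUnion.1 (hF hx)
      obtain ⟨y, hy, hxy⟩ := ih x hxF
      refine ⟨S i y, hK i (mem_image_of_mem _ hy), ((hS i).dist_le_mul x y).trans ?_⟩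
      rw [pow_succ', mul_assoc]
      gcongr
  intro x hx
  rw [← hK_closed.closure_eq, Metric.mem_closure_iff]
  intro η hη
  obtain ⟨n, hn⟩ := ((tendsto_pow_mul_nhds_zero hq M).eventually_lt_const hη).exists
  obtain ⟨y, hy, hxy⟩ := h_approx n x hx
  exact ⟨y, hy, hxy.trans_lt hn⟩

lemma dist_codingMap_le (hS : ∀ i, LipschitzWith q (S i)) (hF : Bornology.IsBounded F)
    (hπ_mem : ∀ w, π w ∈ F) (hπ : ∀ w, π w = S (w 0) (π (shift w))) {n : ℕ} {w v : ℕ → ι}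
    (hwv : w ∈ PiNat.cylinder v n) : dist (π w) (π v) ≤ q ^ n * diam F := by
  induction n generalizing w v with
  | zero => simpa using dist_le_diam_of_mem hF (hπ_mem w) (hπ_mem v)
  | succ n ih =>
    have h_shift : shift w ∈ PiNat.cylinder (shift v) n := fun i hi => hwv (i + 1) (by omega)
    calc dist (π w) (π v) = dist (S (v 0) (π (shift w))) (S (v 0) (π (shift v))) := by
          rw [hπ w, hπ v, hwv 0 n.succ_pos]
      _ ≤ q * dist (π (shift w)) (π (shift v)) := (hS _).dist_le_mul _ _
      _ ≤ q ^ (n + 1) * diam F := by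
          rw [pow_succ', mul_assoc]
          gcongr
          exact ih h_shift

lemma continuous_codingMap [TopologicalSpace ι] [DiscreteTopology ι] (hq : q < 1)
    (hS : ∀ i, LipschitzWith q (S i)) (hF : Bornology.IsBounded F) (hπ_mem : ∀ w, π w ∈ F)
    (hπ : ∀ w, π w = S (w 0) (π (shift w))) : Continuous π := by
  refine continuous_iff_continuousAt.2 fun v => Metric.tendsto_nhds.2 fun η hη => ?_
  obtain ⟨n, hn⟩ := ((tendsto_pow_mul_nhds_zero hq (diam F)).eventually_lt_const hη).exists
  filter_upwards [(PiNat.isOpen_cylinder _ v n).mem_nhds (PiNat.self_mem_cylinder v n)] with w hw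
  exact (dist_codingMap_le hS hF hπ_mem hπ hw).trans_lt hn

end PseudoMetric

lemma subset_range_codingMap [MetricSpace E] {S : ι → E → E} {q : ℝ≥0} {F : Set E}
    {π : (ℕ → ι) → E} [Finite ι] [Nonempty ι] [TopologicalSpace ι] [DiscreteTopology ι]
    (hq : q < 1) (hS : ∀ i, LipschitzWith q (S i)) (hF_bdd : Bornology.IsBounded F)
    (hF : F ⊆ ⋃ i, S i '' F) (hπ_mem : ∀ w, π w ∈ F) (hπ : ∀ w, π w = S (w 0) (π (shift w))) :
    F ⊆ range π := by
  refine subset_of_subset_iUnion_image hq hS hF_bdd hF ?_ (range_nonempty π) ?_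
  · exact (isCompact_range (continuous_codingMap hq hS hF_bdd hπ_mem hπ)).isClosed
  · rintro i _ ⟨_, ⟨w, rfl⟩, rfl⟩
    exact ⟨fun n => Nat.casesOn n i w, hπ _⟩

end IteratedFunctionSystem

section OpenSetCondition

lemma disjoint_closure_of_isOpen_of_subset_closure {X : Type*} [TopologicalSpace X]
    {A B U : Set X} (hB : IsOpen B) (hAB : Disjoint A B) (hU : IsOpen U) (hUA : U ⊆ closure A) :
    Disjoint U (closure B) :=
  ((hAB.closure_left hB).mono_left hUA).closure_right hU

variable {E ι : Type*} [NormedAddCommGroup E] [InnerProductSpace ℝ E] [FiniteDimensional ℝ E]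
  {S : ι → E → E} {r : ι → ℝ} {F J : Set E}

lemma inter_ball_infDist_compl_image_subset (hr : ∀ i, 0 < r i)
    (hS : ∀ i x y, dist (S i x) (S i y) = r i * dist x y) (hF : F ⊆ ⋃ i, S i '' F) (hFJ : F ⊆ J)
    (hJ_reg : J = closure (interior J))
    (hJ_disj : ∀ i j, i ≠ j → Disjoint (S i '' interior J) (S j '' interior J)) (i : ι) (x : E) :
    F ∩ ball x (infDist x (S i '' J)ᶜ) ⊆ S i '' F := by
  choose e he using fun i => exists_homeomorph_of_dist_eq_mul (hr i) (hS i)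
  have h_closure : ∀ j, S j '' J = closure (S j '' interior J) := fun j => by
    rw [← he j, ← (e j).image_closure, ← hJ_reg]
  have h_open : ∀ j, IsOpen (S j '' interior J) := fun j => by
    rw [← he j]
    exact (e j).isOpenMap _ isOpen_interior
  rintro z ⟨hzF, hz_ball⟩
  obtain ⟨j, hzj⟩ := mem_iUnion.1 (hF hzF)
  obtain rfl | hij := eq_or_ne i j
  · exact hzj
  · have h_disj : Disjoint (ball x (infDist x (S i '' J)ᶜ)) (S j '' J) := by
      rw [h_closure j]
      exact disjoint_closure_of_isOpen_of_subset_closure (h_open j) (hJ_disj i j hij) isOpen_ball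
        (h_closure i ▸ ball_infDist_compl_subset)
    exact (disjoint_left.1 h_disj hz_ball (image_mono hFJ hzj)).elim

end OpenSetCondition

section LocalDensity

lemma IsBernoulli.measure_infDist_compl_div_pos_ne_zero {E ι : Type*} [PseudoMetricSpace E]
    [TopologicalSpace ι] [DiscreteTopology ι] [MeasurableSpace ι] {ν : Measure (ℕ → ι)}
    {p : ι → ℝ≥0∞} (hp : ∀ i, p i ≠ 0) (hν : IsBernoulli ν p) {π : (ℕ → ι) → E}
    (hπ : Continuous π) {F J : Set E} (hF : F ⊆ range π) (hJ : Jᶜ.Nonempty)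
    (hFJ : (F ∩ interior J).Nonempty) {b : ℝ} (hb : 0 < b) :
    ν {w | 0 < infDist (π w) Jᶜ / b} ≠ 0 := by
  have h_eq : {w | 0 < infDist (π w) Jᶜ / b} = π ⁻¹' interior J := by
    ext w
    rw [mem_ofPred_eq, div_pos_iff_of_pos_right hb, ← infDist_pos_iff_notMem_closure hJ,
      closure_compl, notMem_compl_iff, mem_preimage]
  obtain ⟨x, hxF, hxJ⟩ := hFJ
  obtain ⟨w, rfl⟩ := hF hxF
  rw [h_eq]
  exact hν.measure_ne_zero_of_isOpen hp (isOpen_interior.preimage hπ) ⟨w, hxJ⟩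

variable {E ι : Type*} [NormedAddCommGroup E] [InnerProductSpace ℝ E] [FiniteDimensional ℝ E]
  {S : ι → E → E} {r : ι → ℝ} {F J : Set E} {π : (ℕ → ι) → E}

lemma infDist_compl_image_of_dist_eq_mul {S : E → E} {r : ℝ} (hr : 0 < r)
    (hS : ∀ x y, dist (S x) (S y) = r * dist x y) (x : E) (B : Set E) :
    infDist (S x) (S '' B)ᶜ = r * infDist x Bᶜ := by
  obtain ⟨e, rfl⟩ := exists_homeomorph_of_dist_eq_mul hr hS
  rw [← image_compl_eq e.bijective, infDist_image_of_dist_eq_mul hr.le hS]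

lemma infDist_codingMap_compl_image_div (hr : ∀ i, 0 < r i)
    (hS : ∀ i x y, dist (S i x) (S i y) = r i * dist x y)
    (hπ : ∀ w, π w = S (w 0) (π (shift w))) (b : ℝ) (w : ℕ → ι) :
    infDist (π w) (S (w 0) '' J)ᶜ / b = r (w 0) * (infDist (π (shift w)) Jᶜ / b) := by
  rw [hπ w, infDist_compl_image_of_dist_eq_mul (hr _) (hS _), mul_div_assoc]

variable [MeasurableSpace E] [BorelSpace E] [MeasurableSpace ι]

lemma renormInvariant_parallelDensity [Countable ι] [MeasurableSingletonClass ι] (hr : ∀ i, 0 < r i)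
    (hS : ∀ i x y, dist (S i x) (S i y) = r i * dist x y) (hF_cpt : IsCompact F)
    (hF_self : F = ⋃ i, S i '' F) (hFJ : F ⊆ J) (hJ_reg : J = closure (interior J))
    (hJ_ne : Jᶜ.Nonempty) (hJ_sub : ∀ i, S i '' J ⊆ J)
    (hJ_disj : ∀ i j, i ≠ j → Disjoint (S i '' interior J) (S j '' interior J))
    (hπ_meas : Measurable π) (hπ : ∀ w, π w = S (w 0) (π (shift w))) {a b : ℝ} (ha : 0 ≤ a)
    (hab : a + 1 < b) :
    RenormInvariant shift (fun w => r (w 0)) (fun w => infDist (π w) Jᶜ / b)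
      (fun w => parallelDensity F a (π w))
      (a ^ Module.finrank ℝ E * (volume (ball (0 : E) 1)).toReal) where
  ratio_pos w := hr (w 0)
  measurable_ratio := (measurable_of_countable r).comp (measurable_pi_apply 0)
  measurable_scale := ((continuous_infDist_pt _).measurable.comp hπ_meas).div_const b
  ratio_mul_scale_le w := by
    have hb : 0 < b := by linarith
    rw [← infDist_codingMap_compl_image_div hr hS hπ]
    gcongr
    exact infDist_le_infDist_of_subset (compl_subset_compl.2 (hJ_sub _)) hJ_ne
  measurable_uncurry := (measurable_uncurry_parallelDensity F a).comp
    ((hπ_meas.comp measurable_fst).prodMk measurable_snd)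
  mem_Icc w _ hε := parallelDensity_mem_Icc F ha (π w) hε
  eq_renorm w ε hε hle := by
    rw [← infDist_codingMap_compl_image_div hr hS hπ, le_div_iff₀ (by linarith), hπ w] at hle
    have h_local := inter_ball_infDist_compl_image_subset hr hS hF_self.subset hFJ hJ_reg hJ_disj
      (w 0) (S (w 0) (π (shift w)))
    have h_image : S (w 0) '' F ⊆ F :=
      (subset_iUnion (fun i => S i '' F) (w 0)).trans hF_self.superset
    rw [hπ w]
    refine parallelDensity_image (hr _) (hS _) hF_cpt h_image h_local hε (lt_of_lt_of_le ?_ hle)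
    nlinarith

end LocalDensity

section Main

variable {E ι : Type*} [NormedAddCommGroup E] [InnerProductSpace ℝ E] [FiniteDimensional ℝ E]
  [MeasurableSpace E] [BorelSpace E] [Fintype ι] [MeasurableSpace ι] [MeasurableSingletonClass ι]

theorem statement3_general {d : ℕ} (hd : Module.finrank ℝ E = d) {S : ι → E → E} {r : ι → ℝ}
    (hr : ∀ i, r i ∈ Ioo 0 1) (hS : ∀ i x y, dist (S i x) (S i y) = r i * dist x y) {F : Set E}
    (hF_cpt : IsCompact F) (hF_self : F = ⋃ i, S i '' F) {J : Set E} (hJ_ne : J ≠ univ)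
    (hJ_reg : J = closure (interior J)) (hJ_sub : ∀ i, S i '' J ⊆ J)
    (hJ_disj : ∀ i j, i ≠ j → Disjoint (S i '' interior J) (S j '' interior J))
    (hSOSC : (F ∩ interior J).Nonempty) {p : ι → ℝ} (hp : ∀ i, 0 < p i) {ν : Measure (ℕ → ι)}
    [IsProbabilityMeasure ν]
    (hν : ∀ (n : ℕ) (u : Fin n → ι),
      ν {w | ∀ i : Fin n, w i = u i} = ∏ i, ENNReal.ofReal (p (u i)))
    {π : (ℕ → ι) → E} (hπ_mem : ∀ w, π w ∈ F) (hπ : ∀ w, π w = S (w 0) (π fun n => w (n + 1)))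
    {a b : ℝ} (ha : 0 ≤ a) (hab : a + 1 < b) :
    ∀ᵐ w ∂ν,
      Tendsto (fun δ : ℝ => (Real.log δ⁻¹)⁻¹ *
          ∫ ε in Ioc δ (infDist (π w) Jᶜ / b),
            ε ^ (-(d : ℝ)) * (volume (cthickening ε F ∩ closedBall (π w) (a * ε))).toReal * ε⁻¹)
        (𝓝[>] 0)
        (𝓝 ((∑ j, p j * Real.log (r j)⁻¹)⁻¹ *
          ∫ v, (∫ ε in Ioc (infDist (π v) (S (v 0) '' J)ᶜ / b) (infDist (π v) Jᶜ / b),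
              ε ^ (-(d : ℝ)) *
                (volume (cthickening ε F ∩ closedBall (π v) (a * ε))).toReal * ε⁻¹) ∂ν)) := by
  let _ : TopologicalSpace ι := ⊥
  have : DiscreteTopology ι := ⟨rfl⟩
  have : Nonempty ι := (nonempty_of_isProbabilityMeasure ν).map (· 0)
  have hr_pos : ∀ i, 0 < r i := fun i => (hr i).1
  have hJ_compl : Jᶜ.Nonempty := nonempty_compl.2 hJ_ne
  have hν_bern : IsBernoulli ν fun i => ENNReal.ofReal (p i) := isBernoulli_of_measure_setOf_eq hν
  obtain ⟨q, hq, hS_lip⟩ := exists_lipschitzWith_lt_one (fun i => (hr i).2) hS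
  have hπ_cont : Continuous π := continuous_codingMap hq hS_lip hF_cpt.isBounded hπ_mem hπ
  have hF_range : F ⊆ range π :=
    subset_range_codingMap hq hS_lip hF_cpt.isBounded hF_self.subset hπ_mem hπ
  have hFJ : F ⊆ J := subset_of_subset_iUnion_image hq hS_lip hF_cpt.isBounded hF_self.subset
    (hJ_reg ▸ isClosed_closure) ((hSOSC.mono inter_subset_right).mono interior_subset) hJ_sub
  have h_inv := renormInvariant_parallelDensity hr_pos hS hF_cpt hF_self hFJ hJ_reg hJ_compl hJ_sub
    hJ_disj hπ_cont.measurable hπ ha hab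
  have h_scale := hν_bern.measure_infDist_compl_div_pos_ne_zero
    (fun i => (ENNReal.ofReal_pos.2 (hp i)).ne') hπ_cont hF_range hJ_compl hSOSC (b := b)
    (by linarith)
  have h_int : Integrable (fun w : ℕ → ι => Real.log (r (w 0))⁻¹) ν :=
    (Integrable.of_finite (f := fun i => Real.log (r i)⁻¹)).comp_measurable (measurable_pi_apply 0)
  have h_pos : 0 < ∑ j, p j * Real.log (r j)⁻¹ := Finset.sum_pos
    (fun j _ => mul_pos (hp j) (Real.log_pos (one_lt_inv₀ (hr_pos j) |>.2 (hr j).2)))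
    Finset.univ_nonempty
  have h_exponent : ∫ w, Real.log (r (w 0))⁻¹ ∂ν = ∑ j, p j * Real.log (r j)⁻¹ := by
    simpa only [ENNReal.toReal_ofReal (hp _).le] using
      hν_bern.integral_comp_eval_zero fun i => Real.log (r i)⁻¹
  have h_main := h_inv.ae_tendsto_logAverage hν_bern.ergodic_shift h_scale h_int
    (h_exponent ▸ h_pos)
  simpa only [h_exponent, renormGain, parallelDensity, hd,
    ← infDist_codingMap_compl_image_div hr_pos hS hπ] using h_main

end Main

/-- (Local Minkowski content density.) Under the SOSC with respect
to `J`, with `a > 1`, `ε₀ > 0` and `b := max(2a, diam(J)/ε₀)`, for `ν`-almost every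
code `w` (with `x = π(w)`) the logarithmic Cesàro averages
`(1/ln(1/δ)) ∫_δ^{d(x,ℝ^d∖J)/b} ε^{-d} λ_d(F(ε) ∩ B(x,aε)) ε⁻¹ dε` converge, as
`δ → 0⁺`, to the constant
`(∑_j r_j^D ln(1/r_j))⁻¹ ∫_W ∫_{d(π v,ℝ^d∖S_{v₁}J)/b}^{d(π v,ℝ^d∖J)/b}
ε^{-d} λ_d(F(ε) ∩ B(π v, aε)) ε⁻¹ dε dν(v)`. -/
theorem statement3 (d N : ℕ) (hd : 1 ≤ d) (hN : 2 ≤ N)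
    (S : Fin N → EuclideanSpace ℝ (Fin d) → EuclideanSpace ℝ (Fin d))
    (r : Fin N → ℝ) (hr : ∀ i, r i ∈ Set.Ioo (0 : ℝ) 1)
    (hS : ∀ i x y, dist (S i x) (S i y) = r i * dist x y)
    (F : Set (EuclideanSpace ℝ (Fin d)))
    (hF_ne : F.Nonempty) (hF_cpt : IsCompact F)
    (hF_self : F = ⋃ i, S i '' F)
    (D : ℝ) (hD : 0 < D) (hD_dim : ∑ i, r i ^ D = 1)
    (J : Set (EuclideanSpace ℝ (Fin d))) (hJ_cpt : IsCompact J)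
    (hJ_reg : J = closure (interior J))
    (hJ_sub : ∀ i, S i '' J ⊆ J)
    (hJ_disj : ∀ i j, i ≠ j → Disjoint (S i '' interior J) (S j '' interior J))
    (hSOSC : (F ∩ interior J).Nonempty)
    (ν : Measure (ℕ → Fin N)) [IsProbabilityMeasure ν]
    (hν_cyl : ∀ (n : ℕ) (u : Fin n → Fin N),
      ν {w : ℕ → Fin N | ∀ i : Fin n, w i = u i} = ∏ i, ENNReal.ofReal (r (u i) ^ D))
    (π : (ℕ → Fin N) → EuclideanSpace ℝ (Fin d))
    (hπ_mem : ∀ w, π w ∈ F)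
    (hπ : ∀ w, π w = S (w 0) (π (fun n => w (n + 1))))
    (a ε₀ : ℝ) (ha : 1 < a) (hε₀ : 0 < ε₀)
    (b : ℝ) (hb : b = max (2 * a) (Metric.diam J / ε₀)) :
    ∀ᵐ w ∂ν,
      Tendsto (fun δ : ℝ => (Real.log δ⁻¹)⁻¹ *
          ∫ ε in Set.Ioc δ (Metric.infDist (π w) Jᶜ / b),
            ε ^ (-(d : ℝ)) *
              (volume (Metric.cthickening ε F ∩ Metric.closedBall (π w) (a * ε))).toReal
              * ε⁻¹)
        (𝓝[>] 0)
        (𝓝 ((∑ j, r j ^ D * Real.log (r j)⁻¹)⁻¹ *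
          ∫ v, (∫ ε in Set.Ioc (Metric.infDist (π v) ((S (v 0) '' J))ᶜ / b)
                  (Metric.infDist (π v) Jᶜ / b),
              ε ^ (-(d : ℝ)) *
                (volume (Metric.cthickening ε F
                  ∩ Metric.closedBall (π v) (a * ε))).toReal * ε⁻¹) ∂ν)) := by
  have : Nonempty (Fin d) := ⟨⟨0, hd⟩⟩
  have : NoncompactSpace (EuclideanSpace ℝ (Fin d)) := NormedSpace.noncompactSpace ℝ _
  have hab : a + 1 < b := by
    have h_max := hb ▸ le_max_left (2 * a) (Metric.diam J / ε₀)
    linarith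
  exact statement3_general finrank_euclideanSpace_fin hr hS hF_cpt hF_self hJ_cpt.ne_univ hJ_reg
    hJ_sub hJ_disj hSOSC (fun i => Real.rpow_pos_of_pos (hr i).1 D) hν_cyl hπ_mem hπ
    (zero_le_one.trans ha.le) hab
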